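/- No CacLL formula is simultaneously the positive translation of some acLL formula and the De Morgan dual of the positive translation of some acLL formula; that is, there are no acLL formulas A, B with Â = B̂⊥. -/

import Mathlib

set_option autoImplicit false

namespace NACLL

/-- Structures: binary trees whose leaves are formulas, with an empty structure.
`(∅,Γ)` and `(Γ,∅)` are identified with `Γ` via the smart constructor `comma`. -/
inductive Struct (F : Type) : Type where
  | emp : Struct F
  | leaf : F → Struct F
  | pair : Struct F → Struct F → Struct F

namespace Struct

/-- Pairing of structures, erasing empty substructures. -/
def comma {F : Type} : Struct F → Struct F → Struct F
  | .emp, Δ => Δ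
  | Γ, .emp => Γ
  | Γ, Δ => .pair Γ Δ

def map {F G : Type} (f : F → G) : Struct F → Struct G
  | .emp => .emp
  | .leaf a => .leaf (f a)
  | .pair l r => .pair (map f l) (map f r)

/-- Number of formula leaves of a structure. -/
def nleaves {F : Type} : Struct F → ℕ
  | .emp => 0
  | .leaf _ => 1
  | .pair l r => nleaves l + nleaves r

/-- All formula leaves of a structure satisfy a predicate. -/
def Forall {F : Type} (p : F → Prop) : Struct F → Prop
  | .emp => True
  | .leaf a => p a
  | .pair l r => Forall p l ∧ Forall p r

end Struct

/-- Structural equivalence: the reflexive, symmetric, transitive closure of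
top-level exchange and top-level associativity. -/
inductive StEquiv {F : Type} : Struct F → Struct F → Prop where
  | refl (Γ : Struct F) : StEquiv Γ Γ
  | symm {Γ Δ : Struct F} : StEquiv Γ Δ → StEquiv Δ Γ
  | trans {Γ Δ Θ : Struct F} : StEquiv Γ Δ → StEquiv Δ Θ → StEquiv Γ Θ
  | exch (Γ Δ : Struct F) : StEquiv (Γ.comma Δ) (Δ.comma Γ)
  | assoc (Γ Δ Θ : Struct F) : StEquiv (Γ.comma (Δ.comma Θ)) ((Γ.comma Δ).comma Θ)

/-- Contexts with one hole. -/
inductive Ctx (F : Type) : Type where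
  | hole : Ctx F
  | pairL : Ctx F → Struct F → Ctx F
  | pairR : Struct F → Ctx F → Ctx F

namespace Ctx

/-- Filling the hole of a context with a structure (empty substructures are erased). -/
def fill {F : Type} : Ctx F → Struct F → Struct F
  | .hole, Ξ => Ξ
  | .pairL R Δ, Ξ => (fill R Ξ).comma Δ
  | .pairR Γ R, Ξ => Γ.comma (fill R Ξ)

/-- A context viewed as a structure over `Option F`, the hole being the leaf `none`. -/
def toStruct {F : Type} : Ctx F → Struct (Option F)
  | .hole => .leaf none
  | .pairL R Δ => (toStruct R).comma (Δ.map some)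
  | .pairR Γ R => (Γ.map some).comma (toStruct R)

def size {F : Type} : Ctx F → ℕ
  | .hole => 0
  | .pairL R _ => size R + 2
  | .pairR _ R => size R + 1

/-- The designator. -/
def desi {F : Type} : Ctx F → Struct F
  | .hole => .emp
  | .pairL R Δ => desi (.pairR Δ R)
  | .pairR Γ .hole => Γ
  | .pairR Γ (.pairR Δ P) => desi (.pairR (Γ.comma Δ) P)
  | .pairR Γ (.pairL D Θp) => desi (.pairR (Θp.comma Γ) D)
termination_by c => size c
decreasing_by all_goals simp [size]

/-- All formula leaves of a context (other than the hole) satisfy a predicate. -/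
def Forall {F : Type} (p : F → Prop) : Ctx F → Prop
  | .hole => True
  | .pairL R Δ => Forall p R ∧ Δ.Forall p
  | .pairR Γ R => Γ.Forall p ∧ Forall p R

end Ctx

/-- Structural equivalence of one-hole contexts, treating the hole as a leaf. -/
def CtxEquiv {F : Type} (T X : Ctx F) : Prop := StEquiv T.toStruct X.toStruct

/-- Contexts with two holes (the first hole is the designated one). -/
inductive Ctx2 (F : Type) : Type where
  | splitLR : Ctx F → Ctx F → Ctx2 F
  | splitRL : Ctx F → Ctx F → Ctx2 F
  | pairL : Ctx2 F → Struct F → Ctx2 F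
  | pairR : Struct F → Ctx2 F → Ctx2 F

namespace Ctx2

/-- Filling the first hole of a two-hole context, yielding a one-hole context. -/
def fillFst {F : Type} : Ctx2 F → Struct F → Ctx F
  | .splitLR c1 c2, Δ => .pairR (c1.fill Δ) c2
  | .splitRL c2 c1, Δ => .pairL c2 (c1.fill Δ)
  | .pairL R Γ, Δ => .pairL (fillFst R Δ) Γ
  | .pairR Γ R, Δ => .pairR Γ (fillFst R Δ)

end Ctx2

end NACLL
namespace NACLL

/-- Structural axioms that a subexponential may license. -/
inductive SubAx : Type where
  | C : SubAx
  | W : SubAx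
  | E : SubAx
  | A1 : SubAx
  | A2 : SubAx
deriving DecidableEq

/-- A subexponential signature: a preordered set of indices together with an
upwardly closed assignment of licensed structural axioms. -/
structure Sig (I : Type) where
  le : I → I → Prop
  le_refl : ∀ i, le i i
  le_trans : ∀ {i j k}, le i j → le j k → le i k
  f : I → Set SubAx
  upclosed : ∀ {i j}, le i j → f i ⊆ f j

/-- Formulas of classical non-associative non-commutative multimodal linear logic. -/
inductive CForm (I : Type) : Type where
  | pos : ℕ → CForm I
  | neg : ℕ → CForm I
  | tensor : CForm I → CForm I → CForm I
  | par : CForm I → CForm I → CForm I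
  | one : CForm I
  | bot : CForm I
  | oplus : CForm I → CForm I → CForm I
  | with' : CForm I → CForm I → CForm I
  | zero : CForm I
  | top : CForm I
  | bang : I → CForm I → CForm I
  | quest : I → CForm I → CForm I

namespace CForm

/-- De Morgan dual, pushed to atomic scope (order-reversing on the multiplicatives). -/
def dual {I : Type} : CForm I → CForm I
  | .pos a => .neg a
  | .neg a => .pos a
  | .tensor A B => .par (dual B) (dual A)
  | .par A B => .tensor (dual B) (dual A)
  | .one => .bot
  | .bot => .one
  | .oplus A B => .with' (dual A) (dual B)
  | .with' A B => .oplus (dual A) (dual B)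
  | .zero => .top
  | .top => .zero
  | .bang i A => .quest i (dual A)
  | .quest i A => .bang i (dual A)

/-- The counter ♮ on formulas. -/
def counter {I : Type} : CForm I → ℤ
  | .pos _ => 0
  | .neg _ => 1
  | .tensor A B => counter A + counter B
  | .par A B => counter A + counter B - 1
  | .one => 0
  | .bot => 1
  | .oplus A _ => counter A
  | .with' A _ => counter A
  | .zero => 1
  | .top => 0
  | .bang _ A => counter A
  | .quest _ A => counter A

end CForm

/-- The counter ♮ extended to structures. -/
def Struct.counter {I : Type} : Struct (CForm I) → ℤ
  | .emp => 0
  | .leaf A => A.counter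
  | .pair l r => counter l + counter r

/-- All leaves of a (nonempty) structure are `?ᵏ`-formulas whose label licenses
the given structural axiom. -/
inductive QAll {I : Type} (σ : Sig I) (ax : SubAx) : Struct (CForm I) → Prop where
  | leaf {k : I} {F : CForm I} (h : ax ∈ σ.f k) : QAll σ ax (.leaf (.quest k F))
  | pair {Γ Δ : Struct (CForm I)} : QAll σ ax Γ → QAll σ ax Δ → QAll σ ax (.pair Γ Δ)

/-- `UpSet σ i Γ Γ'` holds iff `Γ^{↑i}` is defined and equal to `Γ'`:
every leaf of `Γ` is a `?ᵏ`-formula which is kept when `i ⪯ k` and erased when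
`i ⋠ k` and `W ∈ f(k)`. -/
inductive UpSet {I : Type} (σ : Sig I) (i : I) : Struct (CForm I) → Struct (CForm I) → Prop where
  | emp : UpSet σ i .emp .emp
  | keep {k : I} {F : CForm I} (h : σ.le i k) :
      UpSet σ i (.leaf (.quest k F)) (.leaf (.quest k F))
  | drop {k : I} {F : CForm I} (h1 : ¬ σ.le i k) (h2 : SubAx.W ∈ σ.f k) :
      UpSet σ i (.leaf (.quest k F)) .emp
  | pair {Γ Γ' Δ Δ' : Struct (CForm I)} :
      UpSet σ i Γ Γ' → UpSet σ i Δ Δ' → UpSet σ i (.pair Γ Δ) (Γ'.comma Δ')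

/-- Structures over `Option F` serve as multi-hole contexts: `none`-leaves are
holes. `fillAll T D` fills every hole with `D` (erasing empty substructures). -/
def fillAll {F : Type} : Struct (Option F) → Struct F → Struct F
  | .emp, _ => .emp
  | .leaf (some a), _ => .leaf a
  | .leaf none, D => D
  | .pair l r, D => (fillAll l D).comma (fillAll r D)

/-- Derivability in the one-sided classical sequent calculus CacLL over the
signature `σ`.  The Boolean flag indicates whether the cut rule may be used:
`CDer σ false` is cut-free CacLL, `CDer σ true` is CacLL extended with cut. -/
inductive CDer {I : Type} (σ : Sig I) : Bool → Struct (CForm I) → Prop where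
  | initP {b : Bool} (a : ℕ) :
      CDer σ b (.pair (.leaf (.pos a)) (.leaf (.neg a)))
  | initN {b : Bool} (a : ℕ) :
      CDer σ b (.pair (.leaf (.neg a)) (.leaf (.pos a)))
  | tensor {b : Bool} {Γ Δ : Struct (CForm I)} {F G : CForm I} :
      CDer σ b (Γ.comma (.leaf G)) → CDer σ b (Δ.comma (.leaf F)) →
      CDer σ b ((Γ.comma Δ).comma (.leaf (.tensor F G)))
  | par {b : Bool} (R : Ctx (CForm I)) {F G : CForm I} :
      CDer σ b (R.fill (.pair (.leaf F) (.leaf G))) →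
      CDer σ b (R.fill (.leaf (.par F G)))
  | oplus₁ {b : Bool} (R : Ctx (CForm I)) {F1 F2 : CForm I} :
      CDer σ b (R.fill (.leaf F1)) → CDer σ b (R.fill (.leaf (.oplus F1 F2)))
  | oplus₂ {b : Bool} (R : Ctx (CForm I)) {F1 F2 : CForm I} :
      CDer σ b (R.fill (.leaf F2)) → CDer σ b (R.fill (.leaf (.oplus F1 F2)))
  | with' {b : Bool} (R : Ctx (CForm I)) {F1 F2 : CForm I} :
      CDer σ b (R.fill (.leaf F1)) → CDer σ b (R.fill (.leaf F2)) →
      CDer σ b (R.fill (.leaf (.with' F1 F2)))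
  | bot {b : Bool} (R : Ctx (CForm I)) :
      CDer σ b (R.fill .emp) → CDer σ b (R.fill (.leaf .bot))
  | one {b : Bool} : CDer σ b (.leaf .one)
  | top {b : Bool} (R : Ctx (CForm I)) : CDer σ b (R.fill (.leaf .top))
  | exch {b : Bool} {Γ Δ : Struct (CForm I)} :
      CDer σ b (Δ.comma Γ) → CDer σ b (Γ.comma Δ)
  | assoc₁ {b : Bool} {Γ Δ Θ : Struct (CForm I)} :
      CDer σ b (Γ.comma (Δ.comma Θ)) → CDer σ b ((Γ.comma Δ).comma Θ)
  | assoc₂ {b : Bool} {Γ Δ Θ : Struct (CForm I)} :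
      CDer σ b ((Γ.comma Δ).comma Θ) → CDer σ b (Γ.comma (Δ.comma Θ))
  | prom {b : Bool} {Γ Γ' : Struct (CForm I)} {i : I} {F : CForm I} :
      UpSet σ i Γ Γ' → CDer σ b (Γ'.comma (.leaf F)) →
      CDer σ b (Γ.comma (.leaf (.bang i F)))
  | der {b : Bool} (R : Ctx (CForm I)) {i : I} {F : CForm I} :
      CDer σ b (R.fill (.leaf F)) → CDer σ b (R.fill (.leaf (.quest i F)))
  | qA1 {b : Bool} {Δ1 Δ2 Δ3 Γ : Struct (CForm I)} (h : QAll σ .A1 Γ) :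
      CDer σ b (((Δ1.comma Δ2).comma Δ3).comma Γ) →
      CDer σ b ((Δ1.comma (Δ2.comma Δ3)).comma Γ)
  | qA2 {b : Bool} {Δ1 Δ2 Δ3 Γ : Struct (CForm I)} (h : QAll σ .A2 Γ) :
      CDer σ b ((Δ1.comma (Δ2.comma Δ3)).comma Γ) →
      CDer σ b (((Δ1.comma Δ2).comma Δ3).comma Γ)
  | qE {b : Bool} {Δ1 Δ2 Γ : Struct (CForm I)} (h : QAll σ .E Γ) :
      CDer σ b ((Δ2.comma Δ1).comma Γ) → CDer σ b ((Δ1.comma Δ2).comma Γ)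
  | qW {b : Bool} (R : Ctx (CForm I)) {Δ : Struct (CForm I)} (h : QAll σ .W Δ) :
      CDer σ b (R.fill .emp) → CDer σ b (R.fill Δ)
  | qC {b : Bool} (R : Ctx2 (CForm I)) {Δ : Struct (CForm I)} (h : QAll σ .C Δ) :
      CDer σ b ((R.fillFst Δ).fill Δ) → CDer σ b ((R.fillFst .emp).fill Δ)
  | cut {Γ Δ : Struct (CForm I)} {A : CForm I} :
      CDer σ true (Γ.comma (.leaf A)) → CDer σ true ((Struct.leaf A.dual).comma Δ) →
      CDer σ true (Γ.comma Δ)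

end NACLL
namespace NACLL

/-- Formulas of intuitionistic non-associative non-commutative multimodal
linear logic (acLL). -/
inductive IForm (I : Type) : Type where
  | atom : ℕ → IForm I
  | tensor : IForm I → IForm I → IForm I
  | imp : IForm I → IForm I → IForm I    -- `imp A B` is A → B
  | limp : IForm I → IForm I → IForm I   -- `limp B A` is B ← A
  | oplus : IForm I → IForm I → IForm I
  | with' : IForm I → IForm I → IForm I
  | one : IForm I
  | top : IForm I
  | bang : I → IForm I → IForm I

/-- The positive translation of acLL formulas into CacLL formulas. -/
def IForm.pos {I : Type} : IForm I → CForm I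
  | .atom a => .pos a
  | .tensor A B => .tensor A.pos B.pos
  | .imp A B => .par A.pos.dual B.pos
  | .limp B A => .par B.pos A.pos.dual
  | .oplus A B => .oplus A.pos B.pos
  | .with' A B => .with' A.pos B.pos
  | .one => .one
  | .top => .top
  | .bang i A => .bang i A.pos

/-- The negative translation of structures of acLL formulas: it reverses the
order and takes the De Morgan dual of the positive translation on leaves. -/
def negTrans {I : Type} : Struct (IForm I) → Struct (CForm I)
  | .emp => .emp
  | .leaf A => .leaf A.pos.dual
  | .pair Γ Δ => (negTrans Δ).comma (negTrans Γ)

/-- All leaves of a (nonempty) structure are `!ᵏ`-formulas whose label licenses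
the given structural axiom. -/
inductive BAll {I : Type} (σ : Sig I) (ax : SubAx) : Struct (IForm I) → Prop where
  | leaf {k : I} {F : IForm I} (h : ax ∈ σ.f k) : BAll σ ax (.leaf (.bang k F))
  | pair {Γ Δ : Struct (IForm I)} : BAll σ ax Γ → BAll σ ax Δ → BAll σ ax (.pair Γ Δ)

/-- `IUpSet σ i Γ Γ'` holds iff `Γ^{↑i}` is defined and equal to `Γ'`. -/
inductive IUpSet {I : Type} (σ : Sig I) (i : I) : Struct (IForm I) → Struct (IForm I) → Prop where
  | emp : IUpSet σ i .emp .emp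
  | keep {k : I} {F : IForm I} (h : σ.le i k) :
      IUpSet σ i (.leaf (.bang k F)) (.leaf (.bang k F))
  | drop {k : I} {F : IForm I} (h1 : ¬ σ.le i k) (h2 : SubAx.W ∈ σ.f k) :
      IUpSet σ i (.leaf (.bang k F)) .emp
  | pair {Γ Γ' Δ Δ' : Struct (IForm I)} :
      IUpSet σ i Γ Γ' → IUpSet σ i Δ Δ' → IUpSet σ i (.pair Γ Δ) (Γ'.comma Δ')

/-- Derivability in the two-sided intuitionistic sequent calculus acLL over `σ`. -/
inductive IDer {I : Type} (σ : Sig I) : Struct (IForm I) → IForm I → Prop where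
  | init (A : IForm I) : IDer σ (.leaf A) A
  | tensorL (R : Ctx (IForm I)) {A B C : IForm I} :
      IDer σ (R.fill (.pair (.leaf A) (.leaf B))) C →
      IDer σ (R.fill (.leaf (.tensor A B))) C
  | tensorR {Γ Δ : Struct (IForm I)} {A B : IForm I} :
      IDer σ Γ A → IDer σ Δ B → IDer σ (Γ.comma Δ) (.tensor A B)
  | impL (R : Ctx (IForm I)) {Δ : Struct (IForm I)} {A B C : IForm I} :
      IDer σ Δ A → IDer σ (R.fill (.leaf B)) C →
      IDer σ (R.fill (Δ.comma (.leaf (.imp A B)))) C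
  | impR {Γ : Struct (IForm I)} {A B : IForm I} :
      IDer σ ((Struct.leaf A).comma Γ) B → IDer σ Γ (.imp A B)
  | limpL (R : Ctx (IForm I)) {Δ : Struct (IForm I)} {A B C : IForm I} :
      IDer σ Δ A → IDer σ (R.fill (.leaf B)) C →
      IDer σ (R.fill ((Struct.leaf (.limp B A)).comma Δ)) C
  | limpR {Γ : Struct (IForm I)} {A B : IForm I} :
      IDer σ (Γ.comma (.leaf A)) B → IDer σ Γ (.limp B A)
  | oplusL (R : Ctx (IForm I)) {A B C : IForm I} :
      IDer σ (R.fill (.leaf A)) C → IDer σ (R.fill (.leaf B)) C →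
      IDer σ (R.fill (.leaf (.oplus A B))) C
  | oplusR₁ {Γ : Struct (IForm I)} {A B : IForm I} : IDer σ Γ A → IDer σ Γ (.oplus A B)
  | oplusR₂ {Γ : Struct (IForm I)} {A B : IForm I} : IDer σ Γ B → IDer σ Γ (.oplus A B)
  | withL₁ (R : Ctx (IForm I)) {A B C : IForm I} :
      IDer σ (R.fill (.leaf A)) C → IDer σ (R.fill (.leaf (.with' A B))) C
  | withL₂ (R : Ctx (IForm I)) {A B C : IForm I} :
      IDer σ (R.fill (.leaf B)) C → IDer σ (R.fill (.leaf (.with' A B))) C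
  | withR {Γ : Struct (IForm I)} {A B : IForm I} :
      IDer σ Γ A → IDer σ Γ B → IDer σ Γ (.with' A B)
  | oneL (R : Ctx (IForm I)) {C : IForm I} :
      IDer σ (R.fill .emp) C → IDer σ (R.fill (.leaf .one)) C
  | oneR : IDer σ .emp .one
  | topR (Γ : Struct (IForm I)) : IDer σ Γ .top
  | prom {Γ Γ' : Struct (IForm I)} {i : I} {A : IForm I} :
      IUpSet σ i Γ Γ' → IDer σ Γ' A → IDer σ Γ (.bang i A)
  | der (R : Ctx (IForm I)) {i : I} {A C : IForm I} :
      IDer σ (R.fill (.leaf A)) C → IDer σ (R.fill (.leaf (.bang i A))) C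
  | wk (R : Ctx (IForm I)) {Δ : Struct (IForm I)} {C : IForm I} (h : BAll σ .W Δ) :
      IDer σ (R.fill .emp) C → IDer σ (R.fill Δ) C
  | ctr (R : Ctx2 (IForm I)) {Δ : Struct (IForm I)} {C : IForm I} (h : BAll σ .C Δ) :
      IDer σ ((R.fillFst Δ).fill Δ) C → IDer σ ((R.fillFst .emp).fill Δ) C
  | e1 (R : Ctx (IForm I)) {Δ Θ : Struct (IForm I)} {C : IForm I} (h : BAll σ .E Δ) :
      IDer σ (R.fill (Θ.comma Δ)) C → IDer σ (R.fill (Δ.comma Θ)) C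
  | e2 (R : Ctx (IForm I)) {Δ Θ : Struct (IForm I)} {C : IForm I} (h : BAll σ .E Δ) :
      IDer σ (R.fill (Δ.comma Θ)) C → IDer σ (R.fill (Θ.comma Δ)) C
  | a1 (R : Ctx (IForm I)) {Δ1 Δ2 Δ3 : Struct (IForm I)} {C : IForm I} (h : BAll σ .A1 Δ1) :
      IDer σ (R.fill ((Δ1.comma Δ2).comma Δ3)) C →
      IDer σ (R.fill (Δ1.comma (Δ2.comma Δ3))) C
  | a2 (R : Ctx (IForm I)) {Δ1 Δ2 Δ3 : Struct (IForm I)} {C : IForm I} (h : BAll σ .A2 Δ3) :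
      IDer σ (R.fill (Δ1.comma (Δ2.comma Δ3))) C →
      IDer σ (R.fill ((Δ1.comma Δ2).comma Δ3)) C

end NACLL

namespace NACLL

/-! The counter `♮` separates positive translations from their duals: duality acts on it as the
reflection `c ↦ 1 - c`, and it vanishes on every positive translation, because in `A → B` the
contribution `1` of the dualized antecedent is cancelled by the `-1` of the `⅋`. -/

section Counter

variable {I : Type}

theorem CForm.counter_dual (A : CForm I) : A.dual.counter = 1 - A.counter := by
  induction A with
  | pos | neg | one | bot | zero | top => rfl
  | tensor A B ihA ihB | par A B ihA ihB =>
    simp only [dual, counter, ihA, ihB]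
    ring
  | oplus _ _ ihA _ | with' _ _ ihA _ => exact ihA
  | bang _ _ ih | quest _ _ ih => exact ih

theorem IForm.counter_pos (A : IForm I) : A.pos.counter = 0 := by
  induction A with
  | atom | one | top => rfl
  | tensor A B ihA ihB => simp only [pos, CForm.counter, ihA, ihB, add_zero]
  | imp A B ihA ihB | limp B A ihB ihA =>
    simp only [pos, CForm.counter, CForm.counter_dual, ihA, ihB]
    norm_num
  | oplus _ _ ihA _ | with' _ _ ihA _ => exact ihA
  | bang _ _ ih => exact ih

theorem IForm.counter_dual_pos (A : IForm I) : A.pos.dual.counter = 1 := by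
  rw [CForm.counter_dual, counter_pos, sub_zero]

end Counter

/-- No CacLL formula is simultaneously the positive translation of an acLL
formula and the De Morgan dual of the positive translation of an acLL formula. -/
theorem pos_ne_dual {I : Type} (A B : IForm I) : A.pos ≠ B.pos.dual := by
  intro h
  have zero_eq_one : (0 : ℤ) = 1 :=
    calc
      0 = A.pos.counter := A.counter_pos.symm
      _ = B.pos.dual.counter := congrArg CForm.counter h
      _ = 1 := B.counter_dual_pos
  exact zero_ne_one zero_eq_one

end NACLL
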